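/- Let (ξ(s))_{s∈ℤ} be a stationary sequence of real random variables, k ≥ 1, σ ∈ (0,1], and c ∈ (0,1). For each τ > 0 let (u_n^{(τ)})_{n≥0} be reals with n·P(ξ(0) > u_n^{(τ)}) → τ. Assume that for every τ > 0, (ξ(s))_{s∈ℤ} satisfies the D^{(k)}(u_n^{(τ)}) condition and P(max_{0≤s≤n} ξ(s) ≤ u_n^{(τ)}) → e^{-στ}. Then for every τ > 0, P(max_{1≤s≤⌊cn⌋} ξ(s) ≤ u_n^{(τ)}) → e^{-σcτ} as n → ∞. -/

import Mathlib

/-!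
Put `m = ⌊c n⌋`. Both levels `u τ n` and `u (c τ) m` satisfy `m P(ξ 0 > level) → c τ`: the first
because `m / n → c`, the second by the choice of the levels along `m → ∞`. By stationarity and a
union bound, changing the level from `a` to `b` changes `P(max_{1 ≤ s ≤ m} ξ s ≤ ·)` by at most
`m |P(ξ 0 > a) - P(ξ 0 > b)|` (`abs_prob_max_sub_le`), so the probability in question has the same
limit as `P(max_{1 ≤ s ≤ m} ξ s ≤ u (c τ) m)`. The latter differs from
`P(max_{0 ≤ s ≤ m} ξ s ≤ u (c τ) m) → exp (-σ c τ)` by at most `P(ξ 0 > u (c τ) m) → 0`.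
-/

open MeasureTheory ProbabilityTheory Filter

variable {Ω : Type*} [MeasureSpace Ω]

/-- The σ-field generated by the events {η s ≤ u}, m₁ ≤ s ≤ m₂. -/
def intervalSigma (η : ℕ → Ω → ℝ) (u : ℝ) (m₁ m₂ : ℕ) : MeasurableSpace Ω :=
  MeasurableSpace.generateFrom {A | ∃ s : ℕ, m₁ ≤ s ∧ s ≤ m₂ ∧ A = {ω | η s ω ≤ u}}

/-- The mixing coefficient α_{n,ℓ}: the supremum over 1 ≤ k ≤ n - ℓ,
A ∈ B₀ᵏ(u), B ∈ B_{k+ℓ}ⁿ(u) of |P(A ∩ B) - P(A)P(B)|. -/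
noncomputable def alphaCoef (η : ℕ → Ω → ℝ) (u : ℝ) (n ℓ : ℕ) : ℝ :=
  sSup {x : ℝ | ∃ k : ℕ, ∃ A B : Set Ω, 1 ≤ k ∧ k ≤ n - ℓ ∧
    MeasurableSet[intervalSigma η u 0 k] A ∧ MeasurableSet[intervalSigma η u (k + ℓ) n] B ∧
    x = |(ℙ (A ∩ B)).toReal - (ℙ A).toReal * (ℙ B).toReal|}

/-- The Δ(u_n) condition: there is ℓ_n = o(n) with α_{n,ℓ_n} → 0. -/
def DeltaCond (η : ℕ → Ω → ℝ) (u : ℕ → ℝ) : Prop :=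
  ∃ ℓ : ℕ → ℕ, Tendsto (fun n : ℕ => (ℓ n : ℝ) / n) atTop (nhds 0) ∧
    Tendsto (fun n : ℕ => alphaCoef η (u n) n (ℓ n)) atTop (nhds 0)

/-- The D⁽ᵏ⁾(u_n) condition for a ℤ-indexed sequence. -/
def DkCond (ξ : ℤ → Ω → ℝ) (u : ℕ → ℝ) (k : ℕ) : Prop :=
  DeltaCond (fun i ω => ξ i ω) u ∧
  ∃ s ℓ : ℕ → ℕ, Tendsto (fun n : ℕ => (s n : ℝ)) atTop atTop ∧
    Tendsto (fun n : ℕ => (s n : ℝ) * alphaCoef (fun i ω => ξ i ω) (u n) n (ℓ n)) atTop (nhds 0) ∧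
    Tendsto (fun n : ℕ => (s n : ℝ) * (ℓ n : ℝ) / n) atTop (nhds 0) ∧
    Tendsto (fun n : ℕ => (n : ℝ) *
        (ℙ {ω | u n < ξ 0 ω ∧ (∀ t : ℤ, 1 ≤ t → t ≤ (k : ℤ) - 1 → ξ t ω ≤ u n) ∧
          ∃ t : ℤ, (k : ℤ) ≤ t ∧ t ≤ ((n / s n : ℕ) : ℤ) ∧ u n < ξ t ω}).toReal)
      atTop (nhds 0)

theorem prob_eq_prob_zero (ξ : ℤ → Ω → ℝ) (hξmeas : ∀ s, Measurable (ξ s))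
    (hstat : Measure.map (fun ω => fun s : ℤ => ξ (s + 1) ω) ℙ
      = Measure.map (fun ω => fun s : ℤ => ξ s ω) ℙ) (a : ℝ) (s : ℕ) :
    (ℙ : Measure Ω).real {ω | a < ξ s ω} = (ℙ : Measure Ω).real {ω | a < ξ 0 ω} := by
  induction s with
  | zero => simp
  | succ s ih =>
    rw [← ih]
    have hset : MeasurableSet {x : ℤ → ℝ | a < x s} :=
      measurableSet_lt measurable_const (measurable_pi_apply _)
    have h := congrArg (fun μ => μ {x : ℤ → ℝ | a < x s}) hstat
    rw [Measure.map_apply (measurable_pi_lambda _ fun i => hξmeas _) hset,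
      Measure.map_apply (measurable_pi_lambda _ fun i => hξmeas _) hset] at h
    simpa [measureReal_def] using congrArg ENNReal.toReal h

/-- The union bound `{max ≤ b} ⊆ {max ≤ a} ∪ ⋃ s, {a < ξ s ≤ b}`, evaluated by stationarity. -/
theorem prob_max_sub_le [IsProbabilityMeasure (ℙ : Measure Ω)]
    (ξ : ℤ → Ω → ℝ) (hξmeas : ∀ s, Measurable (ξ s))
    (hstat : Measure.map (fun ω => fun s : ℤ => ξ (s + 1) ω) ℙ
      = Measure.map (fun ω => fun s : ℤ => ξ s ω) ℙ) (m : ℕ) {a b : ℝ} (hab : a ≤ b) :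
    (ℙ : Measure Ω).real {ω | ∀ s : ℤ, 1 ≤ s → s ≤ m → ξ s ω ≤ b}
      ≤ (ℙ : Measure Ω).real {ω | ∀ s : ℤ, 1 ≤ s → s ≤ m → ξ s ω ≤ a}
        + m * ((ℙ : Measure Ω).real {ω | a < ξ 0 ω} - (ℙ : Measure Ω).real {ω | b < ξ 0 ω}) := by
  have hd : ∀ s : ℕ, (ℙ : Measure Ω).real ({ω | a < ξ s ω} \ {ω | b < ξ s ω})
      = (ℙ : Measure Ω).real {ω | a < ξ 0 ω} - (ℙ : Measure Ω).real {ω | b < ξ 0 ω} := by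
    intro s
    have hsub : {ω | b < ξ s ω} ⊆ {ω | a < ξ s ω} := fun ω h => lt_of_le_of_lt hab h
    rw [measureReal_sdiff hsub
      (measurableSet_lt measurable_const (hξmeas _)), prob_eq_prob_zero ξ hξmeas hstat,
      prob_eq_prob_zero ξ hξmeas hstat]
  have hsub : {ω | ∀ s : ℤ, 1 ≤ s → s ≤ m → ξ s ω ≤ b} ⊆
      {ω | ∀ s : ℤ, 1 ≤ s → s ≤ m → ξ s ω ≤ a} ∪
        ⋃ s ∈ Finset.Icc 1 m, ({ω | a < ξ (s : ℕ) ω} \ {ω | b < ξ (s : ℕ) ω}) := by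
    intro ω hω
    by_cases h : ∀ s : ℤ, 1 ≤ s → s ≤ m → ξ s ω ≤ a
    · exact Or.inl h
    · right
      push Not at h
      obtain ⟨s, h1, h2, h3⟩ := h
      lift s to ℕ using by omega
      simp only [Set.mem_iUnion]
      exact ⟨s, Finset.mem_Icc.2 ⟨by omega, by omega⟩, h3, not_lt.2 (hω s h1 h2)⟩
  calc _ ≤ _ := measureReal_mono hsub
    _ ≤ _ := measureReal_union_le _ _
    _ ≤ _ := by
      gcongr
      refine (measureReal_biUnion_finset_le _ _).trans ?_
      simp only [hd, Finset.sum_const, Nat.card_Icc, add_tsub_cancel_right, nsmul_eq_mul, le_refl]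

theorem abs_prob_max_sub_le [IsProbabilityMeasure (ℙ : Measure Ω)]
    (ξ : ℤ → Ω → ℝ) (hξmeas : ∀ s, Measurable (ξ s))
    (hstat : Measure.map (fun ω => fun s : ℤ => ξ (s + 1) ω) ℙ
      = Measure.map (fun ω => fun s : ℤ => ξ s ω) ℙ) (m : ℕ) (a b : ℝ) :
    |(ℙ : Measure Ω).real {ω | ∀ s : ℤ, 1 ≤ s → s ≤ m → ξ s ω ≤ a}
        - (ℙ : Measure Ω).real {ω | ∀ s : ℤ, 1 ≤ s → s ≤ m → ξ s ω ≤ b}|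
      ≤ |m * (ℙ : Measure Ω).real {ω | a < ξ 0 ω}
        - m * (ℙ : Measure Ω).real {ω | b < ξ 0 ω}| := by
  wlog hab : a ≤ b generalizing a b
  · rw [abs_sub_comm, abs_sub_comm (_ * _)]
    exact this b a (le_of_not_ge hab)
  have h1 := prob_max_sub_le ξ hξmeas hstat m hab
  have h2 : (ℙ : Measure Ω).real {ω | ∀ s : ℤ, 1 ≤ s → s ≤ m → ξ s ω ≤ a}
      ≤ (ℙ : Measure Ω).real {ω | ∀ s : ℤ, 1 ≤ s → s ≤ m → ξ s ω ≤ b} :=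
    measureReal_mono fun ω h s hs hs' => (h s hs hs').trans hab
  rw [abs_sub_comm, abs_of_nonneg (sub_nonneg.2 h2)]
  refine le_trans ?_ (le_abs_self _)
  linarith

theorem abs_prob_max_one_sub_zero_le [IsProbabilityMeasure (ℙ : Measure Ω)]
    (ξ : ℤ → Ω → ℝ) (m : ℕ) (a : ℝ) :
    |(ℙ : Measure Ω).real {ω | ∀ s : ℤ, 1 ≤ s → s ≤ m → ξ s ω ≤ a}
        - (ℙ : Measure Ω).real {ω | ∀ s : ℤ, 0 ≤ s → s ≤ m → ξ s ω ≤ a}|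
      ≤ (ℙ : Measure Ω).real {ω | a < ξ 0 ω} := by
  have h2 : (ℙ : Measure Ω).real {ω | ∀ s : ℤ, 0 ≤ s → s ≤ m → ξ s ω ≤ a}
      ≤ (ℙ : Measure Ω).real {ω | ∀ s : ℤ, 1 ≤ s → s ≤ m → ξ s ω ≤ a} :=
    measureReal_mono fun ω h s hs hs' => h s (by omega) hs'
  have hsub : {ω | ∀ s : ℤ, 1 ≤ s → s ≤ m → ξ s ω ≤ a} ⊆
      {ω | ∀ s : ℤ, 0 ≤ s → s ≤ m → ξ s ω ≤ a} ∪ {ω | a < ξ 0 ω} := by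
    intro ω hω
    by_cases h : a < ξ 0 ω
    · exact Or.inr h
    · refine Or.inl fun s hs hs' => ?_
      rcases hs.eq_or_lt with rfl | h0
      · exact not_lt.1 h
      · exact hω s h0 hs'
  have h3 := (measureReal_mono (μ := (ℙ : Measure Ω)) hsub).trans (measureReal_union_le _ _)
  rw [abs_of_nonneg (sub_nonneg.2 h2)]
  linarith

/-- If the stationary sequence ξ satisfies D⁽ᵏ⁾(u_n^{(τ)}) for every τ > 0 and has
extremal index σ, then P(max_{1≤s≤⌊cn⌋} ξ(s) ≤ u_n^{(τ)}) → e^{-σcτ}. -/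
theorem stmt5 [IsProbabilityMeasure (ℙ : Measure Ω)]
    (ξ : ℤ → Ω → ℝ) (hξmeas : ∀ s, Measurable (ξ s))
    (hstat : Measure.map (fun ω => fun s : ℤ => ξ (s + 1) ω) ℙ
      = Measure.map (fun ω => fun s : ℤ => ξ s ω) ℙ)
    (k : ℕ) (hk : 1 ≤ k) (σ : ℝ) (hσ : σ ∈ Set.Ioc (0 : ℝ) 1)
    (c : ℝ) (hc : c ∈ Set.Ioo (0 : ℝ) 1)
    (u : ℝ → ℕ → ℝ)
    (hu : ∀ τ > (0 : ℝ),
      Tendsto (fun n : ℕ => (n : ℝ) * (ℙ {ω | u τ n < ξ 0 ω}).toReal) atTop (nhds τ))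
    (hDk : ∀ τ > (0 : ℝ), DkCond ξ (u τ) k)
    (hext : ∀ τ > (0 : ℝ),
      Tendsto (fun n : ℕ => (ℙ {ω | ∀ s : ℤ, 0 ≤ s → s ≤ (n : ℤ) → ξ s ω ≤ u τ n}).toReal)
        atTop (nhds (Real.exp (-(σ * τ))))) :
    ∀ τ > (0 : ℝ),
      Tendsto
        (fun n : ℕ => (ℙ {ω | ∀ s : ℤ, 1 ≤ s → s ≤ ⌊c * (n : ℝ)⌋ → ξ s ω ≤ u τ n}).toReal)
        atTop (nhds (Real.exp (-(σ * c * τ)))) := by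
  intro τ hτ
  simp only [← measureReal_def] at hu hext ⊢
  obtain ⟨hc0, -⟩ := hc
  have hcτ : 0 < c * τ := mul_pos hc0 hτ
  set m : ℕ → ℕ := fun n => ⌊c * (n : ℝ)⌋₊ with hm
  have hmtop : Tendsto m atTop atTop :=
    tendsto_nat_floor_atTop.comp (tendsto_natCast_atTop_atTop.const_mul_atTop hc0)
  have hmdiv : Tendsto (fun n : ℕ => (m n : ℝ) / n) atTop (nhds c) :=
    (tendsto_nat_floor_mul_div_atTop hc0.le).comp tendsto_natCast_atTop_atTop
  have hlevel : Tendsto (fun n => (m n : ℝ) * (ℙ : Measure Ω).real {ω | u τ n < ξ 0 ω})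
      atTop (nhds (c * τ)) := by
    refine (hmdiv.mul (hu τ hτ)).congr' ?_
    filter_upwards [eventually_gt_atTop 0] with n hn
    have : (n : ℝ) ≠ 0 := by positivity
    field_simp
  have hdiff := (hlevel.sub ((hu _ hcτ).comp hmtop)).abs
  rw [sub_self, abs_zero] at hdiff
  have hzero : Tendsto (fun n : ℕ => (ℙ : Measure Ω).real {ω | u (c * τ) n < ξ 0 ω})
      atTop (nhds 0) := by
    have h := (hu _ hcτ).mul (tendsto_inv_atTop_nhds_zero_nat (𝕜 := ℝ))
    rw [mul_zero] at h
    refine h.congr' ?_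
    filter_upwards [eventually_gt_atTop 0] with n hn
    have : (n : ℝ) ≠ 0 := by positivity
    field_simp
  have e1 := squeeze_zero_norm (f := fun n =>
    (ℙ : Measure Ω).real {ω | ∀ s : ℤ, 1 ≤ s → s ≤ m n → ξ s ω ≤ u τ n}
      - (ℙ : Measure Ω).real {ω | ∀ s : ℤ, 1 ≤ s → s ≤ m n → ξ s ω ≤ u (c * τ) (m n)})
    (fun n => abs_prob_max_sub_le ξ hξmeas hstat (m n) (u τ n)
    (u (c * τ) (m n))) hdiff
  have e2 := squeeze_zero_norm (f := fun n =>
    (ℙ : Measure Ω).real {ω | ∀ s : ℤ, 1 ≤ s → s ≤ m n → ξ s ω ≤ u (c * τ) (m n)}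
      - (ℙ : Measure Ω).real {ω | ∀ s : ℤ, 0 ≤ s → s ≤ m n → ξ s ω ≤ u (c * τ) (m n)})
    (fun n => abs_prob_max_one_sub_zero_le ξ (m n) (u (c * τ) (m n)))
    (hzero.comp hmtop)
  have h := (e1.add e2).add ((hext _ hcτ).comp hmtop)
  have hfloor : ∀ n : ℕ, ⌊c * (n : ℝ)⌋ = (m n : ℤ) := fun n =>
    (Int.natCast_floor_eq_floor (by positivity)).symm
  simp only [hfloor]
  convert h using 2
  · simp
  · rw [zero_add, zero_add, mul_assoc]
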